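/- arXiv:1212.1529 — 2 statements merged into one kernel-verified Lean document; each statement's English description precedes it below -/
import Mathlib

section
/- Let X be the Cantor space and let M be a maximal chain of nonempty closed subsets of X. For nonempty clopen subsets C, D of X: (1) if C ⊆ D then M_D ⊆ M_C; (2) if C ∩ D = ∅ then M_C ≠ M_D. Here M_C = ⋂{M ∈ M : M ∩ C ≠ ∅}. -/
/-- The Cantor space. -/
abbrev CantorSpace : Type := ℕ → Bool

/-- `M` is a maximal chain of nonempty closed subsets of `X`: a family of nonempty closed
subsets linearly ordered by inclusion, not properly contained in any other such family. -/
def IsMaxChainOfClosed {X : Type} [TopologicalSpace X] (M : Set (Set X)) : Prop :=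
  (∀ A ∈ M, A.Nonempty ∧ IsClosed A) ∧ IsChain (· ⊆ ·) M ∧
  ∀ M' : Set (Set X), (∀ A ∈ M', A.Nonempty ∧ IsClosed A) → IsChain (· ⊆ ·) M' →
    M ⊆ M' → M' = M

/-- `chainInter M C` is the set `M_C = ⋂ {A ∈ M : A ∩ C ≠ ∅}`. -/
def chainInter {X : Type} [TopologicalSpace X] (M : Set (Set X)) (C : Set X) : Set X :=
  ⋂₀ {A | A ∈ M ∧ (A ∩ C).Nonempty}

/-!
STATEMENT 13: Let X be the Cantor space and M a maximal chain of nonempty closed subsets of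
X. For nonempty clopen C, D ⊆ X: (1) if C ⊆ D then M_D ⊆ M_C; (2) if C ∩ D = ∅ then
M_C ≠ M_D.
-/

/-!
The set `M_D \ D` is comparable with every member of `M`: a member meeting `D` contains `M_D`, and
a member missing `D` is contained in `M_D`. So, when `D` is open and `M_D \ D` is nonempty,
maximality puts `M_D \ D` into `M`. If `C` is disjoint from `D` and meets `M_D`, then `M_D \ D`
meets `C`, whence `M_C ⊆ M_D \ D`. Compactness gives that `M_C` meets `C` and `M_D` meets `D`, so
`M_C = M_D` is impossible.
-/

theorem nonempty_sInter_inter_of_isChain {X : Type*} [TopologicalSpace X] {S : Set (Set X)}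
    {K : Set X} (hS : IsChain (· ⊆ ·) S) (hclosed : ∀ A ∈ S, IsClosed A) (hK : IsCompact K)
    (hKne : K.Nonempty) (hmeet : ∀ A ∈ S, (A ∩ K).Nonempty) : (⋂₀ S ∩ K).Nonempty := by
  rcases S.eq_empty_or_nonempty with rfl | hSne
  · simpa only [Set.sInter_empty, Set.univ_inter] using hKne
  · have : Nonempty S := hSne.to_subtype
    have hge : IsChain (· ⊇ ·) S := hS.symm
    have hdir : Directed (· ⊇ ·) ((↑) : S → Set X) := hge.directedOn.directed_val
    by_contra hempty
    rw [Set.not_nonempty_iff_eq_empty, Set.inter_comm, Set.sInter_eq_iInter] at hempty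
    obtain ⟨⟨A, hA⟩, hKA⟩ :=
      hK.elim_directed_family_closed ((↑) : S → Set X) (fun A => hclosed A A.2) hempty hdir
    exact (hmeet A hA).ne_empty (Set.inter_comm A K ▸ hKA)

section

variable {X : Type} [TopologicalSpace X] {M : Set (Set X)} {A C D : Set X}

theorem antitone_chainInter (M : Set (Set X)) : Antitone (chainInter M) :=
  fun _ _ hCD => Set.sInter_subset_sInter
    fun _ hA => ⟨hA.1, hA.2.mono (Set.inter_subset_inter_right _ hCD)⟩

theorem chainInter_subset (hA : A ∈ M) (hAC : (A ∩ C).Nonempty) : chainInter M C ⊆ A :=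
  Set.sInter_subset_of_mem ⟨hA, hAC⟩

theorem subset_chainInter_of_disjoint (hM : IsChain (· ⊆ ·) M) (hA : A ∈ M)
    (hAC : Disjoint A C) : A ⊆ chainInter M C :=
  Set.subset_sInter fun _ ⟨hB, hBC⟩ => (hM.total hA hB).resolve_right
    fun hBA => hBC.not_disjoint (hAC.mono_left hBA)

theorem subset_or_subset_chainInter_sdiff (hM : IsChain (· ⊆ ·) M) (hA : A ∈ M) (D : Set X) :
    A ⊆ chainInter M D \ D ∨ chainInter M D \ D ⊆ A := by
  rcases Set.disjoint_or_nonempty_inter A D with hAD | hAD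
  · exact Or.inl (Set.subset_sdiff.2 ⟨subset_chainInter_of_disjoint hM hA hAD, hAD⟩)
  · exact Or.inr (Set.sdiff_subset.trans (chainInter_subset hA hAD))

theorem isClosed_chainInter (hM : ∀ A ∈ M, IsClosed A) (C : Set X) :
    IsClosed (chainInter M C) :=
  isClosed_sInter fun A hA => hM A hA.1

theorem chainInter_inter_nonempty (hM : IsChain (· ⊆ ·) M) (hclosed : ∀ A ∈ M, IsClosed A)
    (hC : C.Nonempty) (hCcompact : IsCompact C) : (chainInter M C ∩ C).Nonempty :=
  nonempty_sInter_inter_of_isChain (hM.mono fun _ hA => hA.1) (fun A hA => hclosed A hA.1)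
    hCcompact hC fun _ hA => hA.2

namespace IsMaxChainOfClosed

theorem isClosed (hM : IsMaxChainOfClosed M) (hA : A ∈ M) : IsClosed A :=
  (hM.1 A hA).2

theorem isChain (hM : IsMaxChainOfClosed M) : IsChain (· ⊆ ·) M :=
  hM.2.1

theorem mem_of_comparable (hM : IsMaxChainOfClosed M) (hA : A.Nonempty) (hAclosed : IsClosed A)
    (hcomp : ∀ B ∈ M, B ⊆ A ∨ A ⊆ B) : A ∈ M := by
  have hinsert : insert A M = M :=
    hM.2.2 (insert A M) (Set.forall_mem_insert.2 ⟨⟨hA, hAclosed⟩, hM.1⟩)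
      (hM.isChain.insert fun B hB _ => (hcomp B hB).symm) (Set.subset_insert A M)
  exact hinsert ▸ Set.mem_insert A M

theorem chainInter_sdiff_mem (hM : IsMaxChainOfClosed M) (hD : IsOpen D)
    (hne : (chainInter M D \ D).Nonempty) : chainInter M D \ D ∈ M :=
  hM.mem_of_comparable hne ((isClosed_chainInter (fun _ => hM.isClosed) D).sdiff hD)
    fun _ hA => subset_or_subset_chainInter_sdiff hM.isChain hA D

theorem chainInter_subset_chainInter_sdiff (hM : IsMaxChainOfClosed M) (hD : IsOpen D)
    (hCD : Disjoint C D) (hmeet : (chainInter M D ∩ C).Nonempty) :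
    chainInter M C ⊆ chainInter M D \ D := by
  obtain ⟨x, hxM, hxC⟩ := hmeet
  have hx : x ∈ chainInter M D \ D := ⟨hxM, hCD.notMem_of_mem_left hxC⟩
  exact chainInter_subset (hM.chainInter_sdiff_mem hD ⟨x, hx⟩) ⟨x, hx, hxC⟩

theorem chainInter_ne_of_disjoint (hM : IsMaxChainOfClosed M) (hC : C.Nonempty)
    (hCcompact : IsCompact C) (hD : D.Nonempty) (hDcompact : IsCompact D) (hDopen : IsOpen D)
    (hCD : Disjoint C D) : chainInter M C ≠ chainInter M D := by
  intro heq
  have hmeetC : (chainInter M D ∩ C).Nonempty :=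
    heq ▸ chainInter_inter_nonempty hM.isChain (fun _ => hM.isClosed) hC hCcompact
  obtain ⟨y, hyM, hyD⟩ :=
    chainInter_inter_nonempty hM.isChain (fun _ => hM.isClosed) hD hDcompact
  exact (hM.chainInter_subset_chainInter_sdiff hDopen hCD hmeetC (heq ▸ hyM)).2 hyD

end IsMaxChainOfClosed

end

theorem maxChain_inter_monotone_and_disjoint_general {X : Type} [TopologicalSpace X]
    (M : Set (Set X)) (hM : IsMaxChainOfClosed M) (C D : Set X)
    (hC : C.Nonempty) (hCcompact : IsCompact C)
    (hD : D.Nonempty) (hDcompact : IsCompact D) (hDopen : IsOpen D) :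
    (C ⊆ D → chainInter M D ⊆ chainInter M C) ∧
    (C ∩ D = ∅ → chainInter M C ≠ chainInter M D) :=
  ⟨fun hCD => antitone_chainInter M hCD, fun hCD => hM.chainInter_ne_of_disjoint hC hCcompact
    hD hDcompact hDopen (Set.disjoint_iff_inter_eq_empty.2 hCD)⟩

theorem maxChain_inter_monotone_and_disjoint
    (M : Set (Set CantorSpace)) (hM : IsMaxChainOfClosed M)
    (C D : Set CantorSpace) (hC : C.Nonempty) (hCclopen : IsClopen C)
    (hD : D.Nonempty) (hDclopen : IsClopen D) :
    (C ⊆ D → chainInter M D ⊆ chainInter M C) ∧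
    (C ∩ D = ∅ → chainInter M C ≠ chainInter M D) :=
  maxChain_inter_monotone_and_disjoint_general M hM C D hC hCclopen.isClosed.isCompact
    hD hDclopen.isClosed.isCompact hDclopen.isOpen
end

section
/- Let X be a nonempty compact Hausdorff space and let M be a maximal chain of nonempty closed subsets of X. Then ⋂M is a singleton: there exists x ∈ X with ⋂M = {x}. -/
/-!
A nonempty closed set comparable with every member of a maximal chain `M` already belongs to `M`.
Every nonempty closed subset of `⋂₀ M` is such a set, so no proper one exists. Compactness makes
`⋂₀ M` itself nonempty; it is thus a minimal nonempty closed set, and in a T₀ space such a set is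
a single point.
-/

theorem nonempty_sInter_of_directedOn_of_isClosed {X : Type*} [TopologicalSpace X]
    [CompactSpace X] [Nonempty X] {S : Set (Set X)} (hdir : DirectedOn (· ⊇ ·) S)
    (hnonempty : ∀ A ∈ S, A.Nonempty) (hclosed : ∀ A ∈ S, IsClosed A) : (⋂₀ S).Nonempty := by
  rcases S.eq_empty_or_nonempty with rfl | hS
  · rw [Set.sInter_empty]
    exact Set.univ_nonempty
  · have : Nonempty S := hS.to_subtype
    exact IsCompact.nonempty_sInter_of_directed_nonempty_isCompact_isClosed
      hdir hnonempty (fun A hA ↦ (hclosed A hA).isCompact) hclosed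

namespace IsMaxChainOfClosed

variable {X : Type} [TopologicalSpace X] {M : Set (Set X)} {C : Set X}

protected theorem isClosed_sInter (hM : IsMaxChainOfClosed M) : IsClosed (⋂₀ M) :=
  isClosed_sInter fun A hA ↦ (hM.1 A hA).2

theorem nonempty_sInter [CompactSpace X] [Nonempty X] (hM : IsMaxChainOfClosed M) :
    (⋂₀ M).Nonempty := by
  obtain ⟨hmem, hchain, -⟩ := hM
  have hchain' : IsChain (· ⊇ ·) M := hchain.symm
  exact nonempty_sInter_of_directedOn_of_isClosed hchain'.directedOn
    (fun A hA ↦ (hmem A hA).1) fun A hA ↦ (hmem A hA).2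

theorem mem_of_forall_subset_or_subset (hM : IsMaxChainOfClosed M) (hne : C.Nonempty)
    (hC : IsClosed C) (hcomp : ∀ A ∈ M, C ⊆ A ∨ A ⊆ C) : C ∈ M := by
  obtain ⟨hmem, hchain, hmax⟩ := hM
  have hinsert : insert C M = M :=
    hmax (insert C M) (Set.forall_mem_insert.2 ⟨⟨hne, hC⟩, hmem⟩)
      (hchain.insert fun A hA _ ↦ hcomp A hA) (Set.subset_insert C M)
  exact Set.insert_eq_self.1 hinsert

theorem eq_sInter_of_subset (hM : IsMaxChainOfClosed M) (hCM : C ⊆ ⋂₀ M) (hne : C.Nonempty)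
    (hC : IsClosed C) : C = ⋂₀ M := by
  have hmem : C ∈ M := hM.mem_of_forall_subset_or_subset hne hC fun A hA ↦
    Or.inl (Set.subset_sInter_iff.1 hCM A hA)
  exact hCM.antisymm (Set.sInter_subset_of_mem hmem)

end IsMaxChainOfClosed

theorem maxChain_sInter_singleton_general
    {X : Type} [TopologicalSpace X] [CompactSpace X] [T0Space X] [Nonempty X]
    (M : Set (Set X)) (hM : IsMaxChainOfClosed M) :
    ∃ x : X, ⋂₀ M = {x} :=
  minimal_nonempty_closed_eq_singleton hM.isClosed_sInter hM.nonempty_sInter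
    fun _ ↦ hM.eq_sInter_of_subset

/-!
STATEMENT 15: Let X be a nonempty compact Hausdorff space and M a maximal chain of nonempty
closed subsets of X. Then ⋂ M is a singleton.
-/

theorem maxChain_sInter_singleton
    {X : Type} [TopologicalSpace X] [CompactSpace X] [T2Space X] [Nonempty X]
    (M : Set (Set X)) (hM : IsMaxChainOfClosed M) :
    ∃ x : X, ⋂₀ M = {x} :=
  maxChain_sInter_singleton_general M hM
end
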